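/- For g ∈ Aff(n,ℂ) the following are equivalent: (i) g is c-reversible in Aff(n,ℂ); (ii) g is a product of two coninvolutions in Aff(n,ℂ); (iii) the linear part L(g) is c-reversible in GL(n,ℂ), i.e., L(g) is similar to (L(g)‾)⁻¹. -/

import Mathlib

open Matrix
noncomputable section

/-- `Aff n` models the affine group `Aff(n, ℂ) = GL(n, ℂ) ⋉ ℂⁿ`,
with elements `g = (A, v)` acting by `x ↦ A x + v`. -/
@[ext] structure Aff (n : ℕ) where
  A : GL (Fin n) ℂ
  v : Fin n → ℂ

namespace Aff

variable {n : ℕ}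

instance : Mul (Aff n) :=
  ⟨fun g h => ⟨g.A * h.A, (g.A : Matrix (Fin n) (Fin n) ℂ) *ᵥ h.v + g.v⟩⟩

instance : One (Aff n) := ⟨⟨1, 0⟩⟩

instance : Inv (Aff n) :=
  ⟨fun g => ⟨g.A⁻¹, -((g.A⁻¹ : Matrix (Fin n) (Fin n) ℂ) *ᵥ g.v)⟩⟩

@[simp] lemma mul_A (g h : Aff n) : (g * h).A = g.A * h.A := rfl
@[simp] lemma mul_v (g h : Aff n) :
    (g * h).v = (g.A : Matrix (Fin n) (Fin n) ℂ) *ᵥ h.v + g.v := rfl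
@[simp] lemma one_A : (1 : Aff n).A = 1 := rfl
@[simp] lemma one_v : (1 : Aff n).v = 0 := rfl
@[simp] lemma inv_A (g : Aff n) : (g⁻¹).A = g.A⁻¹ := rfl
@[simp] lemma inv_v (g : Aff n) :
    (g⁻¹).v = -((g.A⁻¹ : Matrix (Fin n) (Fin n) ℂ) *ᵥ g.v) := rfl

instance : Group (Aff n) where
  mul_assoc a b c := by
    ext : 1
    · simp [mul_assoc]
    · simp [Units.val_mul, mulVec_add, mulVec_mulVec, add_assoc]
  one_mul a := by
    ext : 1 <;> simp
  mul_one a := by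
    ext : 1 <;> simp
  inv_mul_cancel a := by
    ext : 1 <;> simp

/-- Entrywise complex conjugation on `GL(m, ℂ)`. -/
def glConj {m : Type*} [Fintype m] [DecidableEq m] : GL m ℂ →* GL m ℂ :=
  Units.map ((starRingEnd ℂ).mapMatrix.toMonoidHom)

/-- The conjugate `ḡ = (Ā, v̄)` of an affine transformation `g = (A, v)`. -/
def bar (g : Aff n) : Aff n :=
  ⟨glConj g.A, star g.v⟩

/-- `h ∈ Aff(n, ℂ)` is a coninvolution if `h h̄ = e`. -/
def IsConinvolution (g : Aff n) : Prop := g * bar g = 1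

/-- `g` is c-reversible if `h g h⁻¹ = ḡ⁻¹` for some `h ∈ Aff(n, ℂ)`. -/
def IsCReversible (g : Aff n) : Prop :=
  ∃ h : Aff n, h * g * h⁻¹ = (bar g)⁻¹

/-- `g` is strongly c-reversible if `h g h⁻¹ = ḡ⁻¹` for some coninvolution `h`. -/
def IsStronglyCReversible (g : Aff n) : Prop :=
  ∃ h : Aff n, IsConinvolution h ∧ h * g * h⁻¹ = (bar g)⁻¹

end Aff

/-!
In homogeneous coordinates `g` becomes an endomorphism `G` of `ℂⁿ × ℂ` preserving the last
coordinate `l`, and a coninvolution `h` with `h g h⁻¹ = ḡ⁻¹` becomes an antilinear involution `σ`,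
namely `w ↦ star (h w)`, with `G ∘ σ ∘ G = σ` and `l ∘ σ = star ∘ l`. It is built on the
generalized eigenspaces of `G`. Off the unit circle `l` vanishes, and a matrix conjugating the
linear part of `g` to its conjugate inverse yields an antilinear `T` taking the eigenvalue `a` to
its reflection `1 / ā`. So `T` exchanges the parts outside and inside the circle, and `T` on the
first together with `T⁻¹` on the second is an involution. On the circle `G` alone suffices: on a
Jordan block `ℂ[X] / (X - a)ᵏ` with `|a| = 1`, conjugating coefficients while sending `X` to `X⁻¹`
is a ring involution, and multiplying it by a unimodular constant makes it compatible with `l`.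
-/

/-- The antilinear map `σ` is an involution that reverses the endomorphism `G` and conjugates the
values of the functional `l`. For invertible `G` the identity `G ∘ σ ∘ G = σ` says that
`σ ∘ G ∘ σ = G⁻¹`; this form needs no inverse. -/
structure IsReversingConjugation {R W : Type*} [CommSemiring R] [StarRing R] [AddCommMonoid W]
    [Module R W] (G : Module.End R W) (l : Module.Dual R W) (σ : W →ₗ⋆[R] W) : Prop where
  involutive : Function.Involutive σ
  reverses : ∀ w, G (σ (G w)) = σ w
  functional_apply : ∀ w, l (σ w) = star (l w)

namespace IsReversingConjugation

section Gluing

variable {R V W : Type*} [CommSemiring R] [StarRing R] [AddCommMonoid V] [Module R V]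
  [AddCommMonoid W] [Module R W]

lemma of_subsingleton [Subsingleton W] (G : Module.End R W) (l : Module.Dual R W) :
    IsReversingConjugation G l 0 where
  involutive _ := Subsingleton.elim _ _
  reverses _ := Subsingleton.elim _ _
  functional_apply w := by simp [Subsingleton.elim w 0]

lemma conj_linearEquiv {F : Module.End R V} {k : Module.Dual R V} {τ : V →ₗ⋆[R] V}
    (h : IsReversingConjugation F k τ) (e : V ≃ₗ[R] W) {G : Module.End R W} {l : Module.Dual R W}
    (hG : ∀ x, G (e x) = e (F x)) (hl : ∀ x, l (e x) = k x) :
    IsReversingConjugation G l ((e.toLinearMap.comp τ).comp e.symm.toLinearMap) where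
  involutive w := by simp [h.involutive (e.symm w)]
  reverses w := by
    obtain ⟨x, rfl⟩ := e.surjective w
    simp [hG, h.reverses]
  functional_apply w := by
    obtain ⟨x, rfl⟩ := e.surjective w
    simp [hl, h.functional_apply]

lemma exists_pi {ι : Type*} [Finite ι] [DecidableEq ι] {M : ι → Type*}
    [∀ i, AddCommMonoid (M i)] [∀ i, Module R (M i)] (G : ∀ i, Module.End R (M i))
    (l : Module.Dual R (∀ i, M i))
    (h : ∀ i, ∃ σ, IsReversingConjugation (G i) (l ∘ₗ LinearMap.single R M i) σ) :
    ∃ σ, IsReversingConjugation (LinearMap.piMap G) l σ := by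
  cases nonempty_fintype ι
  choose σ hσ using h
  refine ⟨{ toFun := fun f i ↦ σ i (f i)
            map_add' := fun f f' ↦ funext fun i ↦ map_add (σ i) _ _
            map_smul' := fun c f ↦ funext fun i ↦ map_smulₛₗ (σ i) _ _ }, ?_, ?_, ?_⟩
  · exact fun f ↦ funext fun i ↦ (hσ i).involutive (f i)
  · exact fun f ↦ funext fun i ↦ (hσ i).reverses (f i)
  · intro f
    have sum_single (f : ∀ i, M i) : l f = ∑ i, l (Pi.single i (f i)) := by
      rw [← map_sum, Finset.univ_sum_single]
    rw [sum_single, sum_single f, star_sum]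
    exact Finset.sum_congr rfl fun i _ ↦ (hσ i).functional_apply (f i)

lemma exists_prod {F : Module.End R V} {k : Module.Dual R V} {τ : V →ₗ⋆[R] V}
    {G : Module.End R W} {l : Module.Dual R W} {σ : W →ₗ⋆[R] W}
    (hτ : IsReversingConjugation F k τ) (hσ : IsReversingConjugation G l σ) :
    ∃ ρ, IsReversingConjugation (F.prodMap G) (k.coprod l) ρ := by
  refine ⟨{ toFun := fun x ↦ (τ x.1, σ x.2)
            map_add' := by simp
            map_smul' := by simp }, ?_, ?_, ?_⟩
  · exact fun x ↦ Prod.ext (hτ.involutive x.1) (hσ.involutive x.2)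
  · exact fun x ↦ Prod.ext (hτ.reverses x.1) (hσ.reverses x.2)
  · intro x
    simp [hτ.functional_apply, hσ.functional_apply]

lemma exists_prod_swap (F : Module.End R V) (G : Module.End R W) (τ : V ≃ₗ⋆[R] W)
    (hτ : ∀ x, G (τ (F x)) = τ x) (hτ' : ∀ y, F (τ.symm (G y)) = τ.symm y) :
    ∃ ρ, IsReversingConjugation (F.prodMap G) 0 ρ := by
  refine ⟨{ toFun := fun x ↦ (τ.symm x.2, τ x.1)
            map_add' := by simp
            map_smul' := fun c x ↦ Prod.ext (map_smulₛₗ τ.symm c x.2) (map_smulₛₗ τ c x.1) },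
    ?_, ?_, ?_⟩
  · exact fun x ↦ Prod.ext (τ.symm_apply_apply x.1) (τ.apply_symm_apply x.2)
  · exact fun x ↦ Prod.ext (hτ' x.2) (hτ x.1)
  · intro x
    simp

end Gluing

end IsReversingConjugation

section JordanBlocks

open Polynomial

universe u v

lemma exists_star_mul_self_eq_one_and_mul_eq_star {K : Type*} [Field K] [StarRing K] (z : K) :
    ∃ c : K, star c * c = 1 ∧ c * z = star z := by
  obtain rfl | hz := eq_or_ne z 0
  · exact ⟨1, by simp⟩
  · have : star z ≠ 0 := star_ne_zero.2 hz
    exact ⟨star z / z, by simp [field], by simp [field]⟩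

/-- The cyclic module `R[X] / (X - a)ᵏ`, on which multiplication by the class of `X` acts as a
Jordan block of size `k` with eigenvalue `a`. -/
abbrev JordanBlock {R : Type u} [CommRing R] (a : R) (k : ℕ) : Type u :=
  AdjoinRoot ((X - C a) ^ k)

namespace JordanBlock

variable {R : Type u} [CommRing R]

/-- The class of `X`, as an element of the ring underlying the block. -/
abbrev root (a : R) (k : ℕ) : JordanBlock a k :=
  AdjoinRoot.root _

/-- Multiplication by the class of `X`, the endomorphism whose matrix is the Jordan block. -/
abbrev mulRoot (a : R) (k : ℕ) : Module.End R (JordanBlock a k) :=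
  LinearMap.mulLeft R (root a k)

lemma root_sub_algebraMap_pow (a : R) (k : ℕ) : (root a k - algebraMap R _ a) ^ k = 0 := by
  rw [root, AdjoinRoot.algebraMap_eq, ← AdjoinRoot.mk_X, ← AdjoinRoot.mk_C, ← map_sub, ← map_pow,
    AdjoinRoot.mk_self]

lemma subsingleton_zero (a : R) : Subsingleton (JordanBlock a 0) :=
  subsingleton_of_zero_eq_one <|
    AdjoinRoot.mk_self.symm.trans ((congrArg _ (pow_zero _)).trans (map_one _))

lemma isUnit_root {a : R} (ha : IsUnit a) (k : ℕ) : IsUnit (root a k) := by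
  have nilpotent : IsNilpotent (root a k - algebraMap R _ a) := ⟨k, root_sub_algebraMap_pow a k⟩
  rw [← add_sub_cancel (algebraMap R _ a) (root a k)]
  exact nilpotent.isUnit_add_left_of_commute (ha.map _) (Commute.all _ _)

lemma dual_ext {a : R} {k : ℕ} {l m : Module.Dual R (JordanBlock a k)}
    (hl : ∀ y, l (mulRoot a k y) = l y) (hm : ∀ y, m (mulRoot a k y) = m y) (h : l 1 = m 1) :
    l = m := by
  have pow_root {l : Module.Dual R (JordanBlock a k)} (hl : ∀ y, l (mulRoot a k y) = l y)
      (n : ℕ) : l (root a k ^ n) = l 1 := by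
    induction n with
    | zero => rw [pow_zero]
    | succ n ih => rw [pow_succ', ← LinearMap.mulLeft_apply R, hl, ih]
  have comp_mk : l ∘ₗ (AdjoinRoot.mkₐ _).toLinearMap = m ∘ₗ (AdjoinRoot.mkₐ _).toLinearMap := by
    ext n
    simp [← X_pow_eq_monomial, pow_root hl, pow_root hm, h]
  ext y
  obtain ⟨p, rfl⟩ := AdjoinRoot.mk_surjective y
  exact LinearMap.congr_fun comp_mk p

variable [StarRing R]

lemma exists_starRingHom {a : R} (ha : star a * a = 1) (k : ℕ) :
    ∃ φ : JordanBlock a k →+* JordanBlock a k,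
      (∀ c, φ (algebraMap R _ c) = algebraMap R _ (star c)) ∧ root a k * φ (root a k) = 1 := by
  obtain ⟨u, hu⟩ := isUnit_root (IsUnit.of_mul_eq_one_right _ ha) k
  have star_mul_self :
      algebraMap R (JordanBlock a k) (star a) * algebraMap R (JordanBlock a k) a = 1 := by
    rw [← map_mul, ha, map_one]
  -- By this identity `u⁻¹` satisfies `(X - star a) ^ k`, the conjugate of the relation for `u`.
  have inv_sub : ↑u⁻¹ - algebraMap R (JordanBlock a k) (star a) =
      -(algebraMap R _ (star a) * ↑u⁻¹) * (root a k - algebraMap R _ a) := by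
    rw [← hu]
    linear_combination
      (-(↑u⁻¹ : JordanBlock a k)) * star_mul_self + algebraMap R _ (star a) * u.inv_mul
  have eval_inv : eval₂ ((algebraMap R (JordanBlock a k)).comp (starRingEnd R)) ↑u⁻¹
      ((X - C a) ^ k) = 0 := by
    rw [eval₂_pow, eval₂_sub, eval₂_X, eval₂_C, RingHom.comp_apply, starRingEnd_apply, inv_sub,
      mul_pow, root_sub_algebraMap_pow, mul_zero]
  refine ⟨AdjoinRoot.lift _ _ eval_inv, fun c ↦ AdjoinRoot.lift_of eval_inv, ?_⟩
  rw [AdjoinRoot.lift_root eval_inv, ← hu, u.mul_inv]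

lemma starRingHom_involutive {a : R} {k : ℕ} {φ : JordanBlock a k →+* JordanBlock a k}
    (φ_algebraMap : ∀ c, φ (algebraMap R _ c) = algebraMap R _ (star c))
    (root_mul_φ_root : root a k * φ (root a k) = 1) : Function.Involutive φ := by
  have φ_φ_root : φ (φ (root a k)) = root a k := by
    refine (left_inv_eq_right_inv root_mul_φ_root ?_).symm
    rw [← map_mul, root_mul_φ_root, map_one]
  refine RingHom.congr_fun (f := φ.comp φ) (g := .id _) (AdjoinRoot.ringHom_ext ?_ φ_φ_root)
  ext c
  simp [← AdjoinRoot.algebraMap_eq, φ_algebraMap]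

variable {K : Type u} [Field K]

lemma hasEigenvalue_mulRoot (a : K) {k : ℕ} (hk : k ≠ 0) : (mulRoot a k).HasEigenvalue a := by
  have eigenvector : (mulRoot a k).HasEigenvector a (AdjoinRoot.mk _ ((X - C a) ^ (k - 1))) := by
    rw [Module.End.hasEigenvector_iff]
    constructor
    · have mk_eq_zero : AdjoinRoot.mk ((X - C a) ^ k) ((X - C a) * (X - C a) ^ (k - 1)) = 0 := by
        rw [mul_pow_sub_one hk, AdjoinRoot.mk_self]
      rw [Module.End.mem_eigenspace_iff, LinearMap.mulLeft_apply, ← sub_eq_zero, Algebra.smul_def,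
        root, AdjoinRoot.algebraMap_eq, ← sub_mul, ← AdjoinRoot.mk_X, ← AdjoinRoot.mk_C,
        ← map_sub, ← map_mul, mk_eq_zero]
    · rw [Ne, AdjoinRoot.mk_eq_zero, pow_dvd_pow_iff (X_sub_C_ne_zero a) (not_isUnit_X_sub_C a)]
      lia
  exact Module.End.hasEigenvalue_of_hasEigenvector eigenvector

lemma exists_isReversingConjugation [StarRing K] {a : K} (ha : star a * a = 1) (k : ℕ)
    (l : Module.Dual K (JordanBlock a k)) (hl : ∀ y, l (mulRoot a k y) = l y) :
    ∃ σ, IsReversingConjugation (mulRoot a k) l σ := by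
  obtain ⟨φ, φ_algebraMap, root_mul_φ_root⟩ := exists_starRingHom ha k
  obtain ⟨c, star_mul_self, mul_l_one⟩ := exists_star_mul_self_eq_one_and_mul_eq_star (l 1)
  have φ_smul (r : K) (y : JordanBlock a k) : φ (r • y) = star r • φ y := by
    rw [Algebra.smul_def, map_mul, φ_algebraMap, ← Algebra.smul_def]
  let σ : JordanBlock a k →ₗ⋆[K] JordanBlock a k :=
    { toFun := fun y ↦ c • φ y
      map_add' := by simp
      map_smul' := fun r y ↦ by rw [φ_smul, smul_comm]; rfl }
  have reverses (y) : mulRoot a k (σ (mulRoot a k y)) = σ y := by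
    change root a k * c • φ (root a k * y) = c • φ y
    rw [map_mul, mul_smul_comm, ← mul_assoc, root_mul_φ_root, one_mul]
  -- An invariant functional is determined by its value at `1`, where the choice of `c` applies.
  have star_comp_l_comp_σ : (starLinearEquiv K).toLinearMap.comp (l.comp σ) = l := by
    refine dual_ext (fun y ↦ ?_) hl ?_
    · change star (l (σ (mulRoot a k y))) = star (l (σ y))
      rw [← hl, reverses]
    · change star (l (c • φ 1)) = l 1
      rw [map_one, map_smul, smul_eq_mul, mul_l_one, star_star]
  refine ⟨σ, fun y ↦ ?_, reverses, fun y ↦ ?_⟩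
  · change c • φ (c • φ y) = y
    rw [φ_smul, starRingHom_involutive φ_algebraMap root_mul_φ_root y, smul_smul, mul_comm,
      star_mul_self, one_smul]
  · exact star_eq_iff_star_eq.1 (LinearMap.congr_fun star_comp_l_comp_σ y) |>.symm

end JordanBlock

lemma exists_linearEquiv_pi_jordanBlock {K : Type u} {W : Type v} [Field K] [IsAlgClosed K]
    [AddCommGroup W] [Module K W] [FiniteDimensional K W] (G : Module.End K W) :
    ∃ (ι : Type u) (_ : Fintype ι) (a : ι → K) (k : ι → ℕ)
      (e : (∀ i, JordanBlock (a i) (k i)) ≃ₗ[K] W),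
      ∀ y, G (e y) = e (LinearMap.piMap (fun i ↦ JordanBlock.mulRoot (a i) (k i)) y) := by
  classical
  obtain ⟨ι, _, p, hp, k, ⟨e⟩⟩ := Module.equiv_directSum_of_isTorsion (R := K[X])
    (M := Module.AEval' G) (Module.AEval.isTorsion_of_finiteDimensional K W G)
  have associated_linear (i : ι) : ∃ a : K, Associated (p i) (X - C a) := by
    obtain ⟨a, ha⟩ := IsAlgClosed.exists_root (p i)
      (by simp [IsAlgClosed.degree_eq_one_of_irreducible K (hp i)])
    exact ⟨a, ((irreducible_X_sub_C a).associated_of_dvd (hp i) (dvd_iff_isRoot.2 ha)).symm⟩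
  choose a ha using associated_linear
  let cyclic : Module.AEval' G ≃ₗ[K[X]] ∀ i, K[X] ⧸ Ideal.span {p i ^ k i} :=
    e.trans (DirectSum.linearEquivFunOnFintype K[X] ι _)
  let blocks : W ≃ₗ[K] ∀ i, AdjoinRoot (p i ^ k i) :=
    (Module.AEval'.of G).trans (cyclic.restrictScalars K)
  have blocks_apply (w : W) : blocks (G w) = fun i ↦ AdjoinRoot.root _ * blocks w i := by
    change cyclic (Module.AEval'.of G (G w)) = (X : K[X]) • cyclic (Module.AEval'.of G w)
    rw [← Module.AEval'.X_smul_of, map_smul]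
  let jordan (i : ι) : AdjoinRoot (p i ^ k i) ≃ₐ[K] JordanBlock (a i) (k i) :=
    AdjoinRoot.algEquivOfAssociated K _ _ (ha i).pow_pow
  have jordan_root (i : ι) : jordan i (AdjoinRoot.root _) = JordanBlock.root (a i) (k i) :=
    AdjoinRoot.algEquivOfAssociated_root ..
  refine ⟨ι, inferInstance, a, k,
    (blocks.trans (LinearEquiv.piCongrRight fun i ↦ (jordan i).toLinearEquiv)).symm, fun y ↦ ?_⟩
  rw [LinearEquiv.eq_symm_apply]
  ext i
  simp [blocks_apply, jordan_root]

lemma exists_isReversingConjugation_of_unitary_eigenvalues {K : Type u} {W : Type v} [Field K]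
    [IsAlgClosed K] [StarRing K] [AddCommGroup W] [Module K W] [FiniteDimensional K W]
    {G : Module.End K W} (hG : ∀ a, G.HasEigenvalue a → star a * a = 1) {l : Module.Dual K W}
    (hl : ∀ w, l (G w) = l w) : ∃ σ, IsReversingConjugation G l σ := by
  classical
  obtain ⟨ι, _, a, k, e, he⟩ := exists_linearEquiv_pi_jordanBlock G
  have G_single (i : ι) (y : JordanBlock (a i) (k i)) :
      G (e (Pi.single i y)) = e (Pi.single i (JordanBlock.mulRoot (a i) (k i) y)) := by
    rw [he]
    congr 1
    exact (Pi.single_op (fun i ↦ JordanBlock.mulRoot (a i) (k i)) (fun _ ↦ map_zero _) i y).symm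
  have hasEigenvalue (i : ι) (hk : k i ≠ 0) : G.HasEigenvalue (a i) := by
    obtain ⟨y, hy⟩ := (JordanBlock.hasEigenvalue_mulRoot (a i) hk).exists_hasEigenvector
    refine Module.End.hasEigenvalue_of_hasEigenvector (x := e (Pi.single i y)) ?_
    rw [Module.End.hasEigenvector_iff, Module.End.mem_eigenspace_iff, G_single, hy.apply_eq_smul,
      Pi.single_smul, map_smul]
    exact ⟨rfl, by simpa using hy.2⟩
  have exists_block (i : ι) : ∃ σ, IsReversingConjugation (JordanBlock.mulRoot (a i) (k i))
      ((l ∘ₗ e.toLinearMap) ∘ₗ LinearMap.single K (fun i ↦ JordanBlock (a i) (k i)) i) σ := by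
    obtain hk | hk := eq_or_ne (k i) 0
    · have : Subsingleton (JordanBlock (a i) (k i)) := hk ▸ JordanBlock.subsingleton_zero (a i)
      exact ⟨0, .of_subsingleton _ _⟩
    · refine JordanBlock.exists_isReversingConjugation (hG _ (hasEigenvalue i hk)) _ _ fun y ↦ ?_
      change l (e (Pi.single i _)) = l (e (Pi.single i y))
      rw [← G_single, hl]
  obtain ⟨σ, hσ⟩ := IsReversingConjugation.exists_pi _ (l ∘ₗ e.toLinearMap) exists_block
  exact ⟨_, hσ.conj_linearEquiv e he fun _ ↦ rfl⟩

end JordanBlocks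

section SpectralSubspaces

variable {R W : Type*} [CommRing R] [AddCommGroup W] [Module R W] {G : Module.End R W}

/-- The sum of the generalized eigenspaces of `G` for the eigenvalues in `S`. -/
def spectralSubspace (G : Module.End R W) (S : Set R) : Submodule R W :=
  ⨆ a ∈ S, G.maxGenEigenspace a

lemma maxGenEigenspace_le_spectralSubspace {S : Set R} {a : R} (ha : a ∈ S) :
    G.maxGenEigenspace a ≤ spectralSubspace G S :=
  le_biSup G.maxGenEigenspace ha

lemma spectralSubspace_union (S S' : Set R) :
    spectralSubspace G (S ∪ S') = spectralSubspace G S ⊔ spectralSubspace G S' :=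
  iSup_union

lemma apply_mem_spectralSubspace {S : Set R} {w : W} (hw : w ∈ spectralSubspace G S) :
    G w ∈ spectralSubspace G S := by
  have le_comap : spectralSubspace G S ≤ (spectralSubspace G S).comap G :=
    iSup₂_le fun a ha _ hx ↦ maxGenEigenspace_le_spectralSubspace ha
      (Module.End.mapsTo_maxGenEigenspace_of_comm (Commute.refl G) a hx)
  exact le_comap hw

/-- The restriction of `G` to one of its spectral subspaces. -/
abbrev spectralRestriction (G : Module.End R W) (S : Set R) :
    Module.End R (spectralSubspace G S) :=
  G.restrict fun _ ↦ apply_mem_spectralSubspace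

lemma dual_apply_pow_sub_smul {l : Module.Dual R W} (hl : ∀ w, l (G w) = l w) (a : R) (k : ℕ)
    (w : W) : l (((G - a • 1) ^ k) w) = (1 - a) ^ k * l w := by
  induction k generalizing w with
  | zero => simp
  | succ k ih =>
    rw [pow_succ, Module.End.mul_apply, ih, pow_succ, mul_assoc]
    congr 1
    simp [hl, sub_mul]

lemma pow_apply_map_pow_sub_smul [StarRing R] {p : Submodule R W} (hp : ∀ w ∈ p, G w ∈ p)
    {T : W →ₗ⋆[R] W} (hT : ∀ w ∈ p, G (T (G w)) = T w) (a : R) (k : ℕ) {w : W} (hw : w ∈ p) :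
    (G ^ k) (T (((G - a • 1) ^ k) w)) = ((1 - star a • G) ^ k) (T w) := by
  induction k generalizing w with
  | zero => simp
  | succ k ih =>
    have commute : Commute G ((1 - star a • G) ^ k) :=
      ((Commute.one_right G).sub_right ((Commute.refl G).smul_right _)).pow_right k
    have sub_mem : (G - a • 1) w ∈ p := p.sub_mem (hp w hw) (p.smul_mem a hw)
    rw [pow_succ (G - a • 1), pow_succ' G, Module.End.mul_apply, Module.End.mul_apply, ih sub_mem,
      ← Module.End.mul_apply, commute.eq, pow_succ, Module.End.mul_apply, Module.End.mul_apply]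
    congr 1
    simp [hT w hw, starRingEnd_apply]

section IsDomain

variable [IsDomain R]

lemma spectralSubspace_le_ker {l : Module.Dual R W} (hl : ∀ w, l (G w) = l w) {S : Set R}
    (hS : 1 ∉ S) : spectralSubspace G S ≤ LinearMap.ker l := by
  refine iSup₂_le fun a ha w hw ↦ ?_
  obtain ⟨k, hk⟩ := Module.End.mem_maxGenEigenspace .. |>.1 hw
  have pow_mul_eq_zero : (1 - a) ^ k * l w = 0 := by
    rw [← dual_apply_pow_sub_smul hl, hk, map_zero]
  have one_sub_ne_zero : 1 - a ≠ 0 := sub_ne_zero.2 (ne_of_mem_of_not_mem ha hS).symm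
  exact (mul_eq_zero_iff_left (pow_ne_zero k one_sub_ne_zero)).1 pow_mul_eq_zero

variable [Module.IsTorsionFree R W]

lemma disjoint_spectralSubspace {S S' : Set R} (h : Disjoint S S') :
    Disjoint (spectralSubspace G S) (spectralSubspace G S') :=
  (Module.End.independent_maxGenEigenspace G).disjoint_biSup_biSup h

lemma mem_of_hasEigenvalue_spectralRestriction {S : Set R} {a : R}
    (h : (spectralRestriction G S).HasEigenvalue a) : a ∈ S := by
  obtain ⟨w, hw⟩ := h.exists_hasEigenvector
  have hGw : (w : W) ∈ G.eigenspace a :=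
    Module.End.mem_eigenspace_iff.2 (congrArg Subtype.val hw.apply_eq_smul)
  by_contra ha
  have disjoint : Disjoint (G.maxGenEigenspace a) (spectralSubspace G S) :=
    (Module.End.independent_maxGenEigenspace G).disjoint_biSup ha
  exact hw.2 <| Subtype.ext <| Submodule.disjoint_def.1 disjoint w
    (G.genEigenspace a |>.monotone le_top hGw) w.2

end IsDomain

end SpectralSubspaces

section FieldSpectralSubspaces

variable {K W : Type*} [Field K] [AddCommGroup W] [Module K W] {G : Module.End K W}

lemma spectralSubspace_univ [IsAlgClosed K] [FiniteDimensional K W] :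
    spectralSubspace G Set.univ = ⊤ :=
  iSup_univ.trans (Module.End.iSup_maxGenEigenspace_eq_top G)

lemma exists_linearEquiv_prod_spectralSubspace [IsAlgClosed K] [FiniteDimensional K W]
    (G : Module.End K W) {A B C : Set K} (hAB : Disjoint A B) (hC : Disjoint (A ∪ B) C)
    (hABC : A ∪ B ∪ C = Set.univ) :
    ∃ e : ((spectralSubspace G A × spectralSubspace G B) × spectralSubspace G C) ≃ₗ[K] W,
      ∀ x, e x = x.1.1 + x.1.2 + x.2 := by
  let f := ((spectralSubspace G A).subtype.coprod (spectralSubspace G B).subtype).coprod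
    (spectralSubspace G C).subtype
  have ker_f : LinearMap.ker f = ⊥ := by
    rw [LinearMap.ker_coprod_of_disjoint_range, LinearMap.ker_coprod_of_disjoint_range,
      Submodule.ker_subtype, Submodule.ker_subtype, Submodule.ker_subtype, Submodule.prod_bot,
      Submodule.prod_bot]
    · simpa using disjoint_spectralSubspace hAB
    · simpa [LinearMap.range_coprod, ← spectralSubspace_union] using disjoint_spectralSubspace hC
  have range_f : LinearMap.range f = ⊤ := by
    simp only [f, LinearMap.range_coprod, Submodule.range_subtype, ← spectralSubspace_union, hABC,
      spectralSubspace_univ]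
  exact ⟨.ofBijective f ⟨LinearMap.ker_eq_bot.1 ker_f, LinearMap.range_eq_top.1 range_f⟩,
    fun _ ↦ rfl⟩

lemma map_mem_spectralSubspace [StarRing K] {S S' : Set K} {T : W →ₗ⋆[K] W}
    (hT : ∀ w ∈ spectralSubspace G S, G (T (G w)) = T w)
    (hS : ∀ a ∈ S, a ≠ 0 → (star a)⁻¹ ∈ S') {w : W} (hw : w ∈ spectralSubspace G S) :
    T w ∈ spectralSubspace G S' := by
  suffices le_comap : spectralSubspace G S ≤ (spectralSubspace G S').comap T from le_comap hw
  refine iSup₂_le fun a ha w hw ↦ ?_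
  obtain ⟨k, hk⟩ := Module.End.mem_maxGenEigenspace .. |>.1 hw
  have pow_apply_eq_zero : ((1 - star a • G) ^ k) (T w) = 0 := by
    rw [← pow_apply_map_pow_sub_smul (fun _ ↦ apply_mem_spectralSubspace) hT a k
      (maxGenEigenspace_le_spectralSubspace ha hw), hk, map_zero, map_zero]
  rw [Submodule.mem_comap]
  obtain rfl | ha' := eq_or_ne a 0
  · have map_eq_zero : T w = 0 := by simpa using pow_apply_eq_zero
    exact map_eq_zero ▸ zero_mem _
  · refine maxGenEigenspace_le_spectralSubspace (hS a ha ha')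
      (Module.End.mem_maxGenEigenspace .. |>.2 ⟨k, ?_⟩)
    have sub_eq_smul : G - (star a)⁻¹ • 1 = -(star a)⁻¹ • (1 - star a • G) := by
      rw [neg_smul, smul_sub, inv_smul_smul₀ (star_ne_zero.2 ha'), neg_sub]
    rw [sub_eq_smul, smul_pow, LinearMap.smul_apply, pow_apply_eq_zero, smul_zero]

end FieldSpectralSubspaces

open Metric in
lemma exists_isReversingConjugation_prod_spectralSubspace {W : Type*} [AddCommGroup W]
    [Module ℂ W] {G : Module.End ℂ W} (T : W ≃ₗ⋆[ℂ] W)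
    (hT : ∀ w ∈ spectralSubspace G (closedBall 0 1)ᶜ, G (T (G w)) = T w)
    (hT' : ∀ w ∈ spectralSubspace G (ball 0 1), G (T.symm (G w)) = T.symm w) :
    ∃ σ, IsReversingConjugation ((spectralRestriction G (closedBall 0 1)ᶜ).prodMap
      (spectralRestriction G (ball 0 1))) 0 σ := by
  have map_outside {w} (hw : w ∈ spectralSubspace G (closedBall 0 1)ᶜ) :
      T w ∈ spectralSubspace G (ball 0 1) := by
    refine map_mem_spectralSubspace (T := T.toLinearMap) hT (fun a ha _ ↦ ?_) hw
    simpa using inv_lt_one_of_one_lt₀ (by simpa using ha)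
  have symm_map_ball {w} (hw : w ∈ spectralSubspace G (ball 0 1)) :
      T.symm w ∈ spectralSubspace G (closedBall 0 1)ᶜ := by
    refine map_mem_spectralSubspace (T := T.symm.toLinearMap) hT' (fun a ha ha' ↦ ?_) hw
    simpa using (one_lt_inv₀ (norm_pos_iff.2 ha')).2 (by simpa using ha)
  have map_eq : (spectralSubspace G (closedBall 0 1)ᶜ).map T.toLinearMap =
      spectralSubspace G (ball 0 1) :=
    le_antisymm (Submodule.map_le_iff_le_comap.2 fun _ ↦ map_outside)
      fun w hw ↦ ⟨T.symm w, symm_map_ball hw, T.apply_symm_apply w⟩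
  exact IsReversingConjugation.exists_prod_swap _ _ (T.ofSubmodules _ _ map_eq)
    (fun x ↦ Subtype.ext (hT x x.2)) fun y ↦ Subtype.ext (hT' y y.2)

open Metric in
lemma exists_isReversingConjugation_of_reverses_on_ker {W : Type*} [AddCommGroup W] [Module ℂ W]
    [FiniteDimensional ℂ W] {G : Module.End ℂ W} {l : Module.Dual ℂ W}
    (hl : ∀ w, l (G w) = l w) (T : W ≃ₗ⋆[ℂ] W)
    (hT : ∀ w ∈ LinearMap.ker l, G (T (G w)) = T w)
    (hT' : ∀ w ∈ LinearMap.ker l, G (T.symm (G w)) = T.symm w) :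
    ∃ σ, IsReversingConjugation G l σ := by
  have outside_le_ker : spectralSubspace G (closedBall 0 1)ᶜ ≤ LinearMap.ker l :=
    spectralSubspace_le_ker hl (by simp)
  have ball_le_ker : spectralSubspace G (ball 0 1) ≤ LinearMap.ker l :=
    spectralSubspace_le_ker hl (by simp)
  obtain ⟨ρ, hρ⟩ := exists_isReversingConjugation_prod_spectralSubspace T
    (fun w hw ↦ hT w (outside_le_ker hw)) fun w hw ↦ hT' w (ball_le_ker hw)
  have star_mul_self (a) (ha : (spectralRestriction G (sphere 0 1)).HasEigenvalue a) :
      star a * a = 1 := by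
    have norm_a : ‖a‖ = 1 := by simpa using mem_of_hasEigenvalue_spectralRestriction ha
    rw [← starRingEnd_apply, Complex.conj_mul', norm_a, Complex.ofReal_one, one_pow]
  obtain ⟨σ, hσ⟩ := exists_isReversingConjugation_of_unitary_eigenvalues star_mul_self
    (l := l ∘ₗ (spectralSubspace G (sphere 0 1)).subtype) fun w ↦ hl w
  obtain ⟨e, he⟩ := exists_linearEquiv_prod_spectralSubspace G
    (A := (closedBall 0 1)ᶜ) (B := ball 0 1) (C := sphere 0 1)
    (disjoint_compl_left.mono_right ball_subset_closedBall)
    ((disjoint_compl_left.mono_right sphere_subset_closedBall).union_left sphere_disjoint_ball.symm)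
    (by rw [Set.union_assoc, ball_union_sphere, Set.compl_union_self])
  obtain ⟨κ, hκ⟩ := hρ.exists_prod hσ
  refine ⟨_, hκ.conj_linearEquiv e (fun x ↦ ?_) fun x ↦ ?_⟩
  · simp [he]
  · have l_outside : l x.1.1 = 0 := outside_le_ker x.1.1.2
    have l_ball : l x.1.2 = 0 := ball_le_ker x.1.2.2
    simp [he, l_outside, l_ball]

namespace Aff

variable {n : ℕ}

lemma star_mulVec_glConj (A : GL (Fin n) ℂ) (x : Fin n → ℂ) :
    star (A.val *ᵥ x) = (glConj A).val *ᵥ star x :=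
  funext fun i ↦ RingHom.map_mulVec (starRingEnd ℂ) A.val x i

lemma bar_mul (g h : Aff n) : bar (g * h) = bar g * bar h := by
  ext1
  · exact map_mul glConj g.A h.A
  · simp [bar, star_mulVec_glConj]

lemma bar_inv (g : Aff n) : bar g⁻¹ = (bar g)⁻¹ :=
  map_inv (MonoidHom.mk' bar bar_mul) g

lemma IsConinvolution.bar_eq_inv {a : Aff n} (ha : IsConinvolution a) : bar a = a⁻¹ :=
  (inv_eq_of_mul_eq_one_right ha).symm

lemma IsConinvolution.inv {a : Aff n} (ha : IsConinvolution a) : IsConinvolution a⁻¹ := by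
  rw [IsConinvolution, bar_inv, ha.bar_eq_inv, inv_inv, inv_mul_cancel]

lemma IsConinvolution.isCReversible_mul {a b : Aff n} (ha : IsConinvolution a)
    (hb : IsConinvolution b) : IsCReversible (a * b) :=
  ⟨b, by rw [bar_mul, ha.bar_eq_inv, hb.bar_eq_inv]; group⟩

lemma IsStronglyCReversible.exists_eq_mul {g : Aff n} (hg : IsStronglyCReversible g) :
    ∃ a b, IsConinvolution a ∧ IsConinvolution b ∧ g = a * b := by
  obtain ⟨h, hh, conj_eq⟩ := hg
  refine ⟨h⁻¹, h * g, hh.inv, ?_, (inv_mul_cancel_left h g).symm⟩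
  rw [IsConinvolution, bar_mul, hh.bar_eq_inv, ← mul_assoc, conj_eq, inv_mul_cancel]

/-- The action of the affine group on `ℂⁿ × ℂ` by homogeneous coordinates: an affine map is the
restriction of the corresponding linear map to the hyperplane `ℂⁿ × {1}`. -/
def homogenize : Aff n →* Module.End ℂ ((Fin n → ℂ) × ℂ) where
  toFun g := (g.A.val.mulVecLin.coprod (LinearMap.toSpanSingleton ℂ _ g.v)).prod
    (LinearMap.snd ℂ _ ℂ)
  map_one' := by
    refine LinearMap.ext fun w ↦ Prod.ext ?_ rfl
    simp
  map_mul' g h := by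
    refine LinearMap.ext fun w ↦ Prod.ext ?_ rfl
    simp [mulVec_add, mulVec_smul, add_assoc]

lemma homogenize_apply (g : Aff n) (w : (Fin n → ℂ) × ℂ) :
    homogenize g w = (g.A.val *ᵥ w.1 + w.2 • g.v, w.2) :=
  rfl

lemma homogenize_injective : Function.Injective (homogenize (n := n)) := by
  intro g h hgh
  have fst_apply (w : (Fin n → ℂ) × ℂ) : g.A.val *ᵥ w.1 + w.2 • g.v = h.A.val *ᵥ w.1 + w.2 • h.v :=
    congrArg Prod.fst (LinearMap.congr_fun hgh w)
  ext1
  · refine Units.ext (ext_of_mulVec_single fun i ↦ ?_)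
    simpa using fst_apply (Pi.single i 1, 0)
  · simpa using fst_apply (0, 1)

lemma homogenize_congr {g h : Aff n} (hA : g.A = h.A) {w : (Fin n → ℂ) × ℂ} (hw : w.2 = 0) :
    homogenize g w = homogenize h w := by
  simp [homogenize_apply, hA, hw]

lemma star_homogenize (g : Aff n) (w : (Fin n → ℂ) × ℂ) :
    star (homogenize g w) = homogenize (bar g) (star w) := by
  refine Prod.ext ?_ rfl
  simp [homogenize_apply, star_mulVec_glConj, bar]

lemma homogenize_star_homogenize (g h : Aff n) (w : (Fin n → ℂ) × ℂ) :
    homogenize g (star (homogenize h w)) = star (homogenize (bar g * h) w) := by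
  rw [eq_star_iff_eq_star, star_homogenize, star_star, map_mul, Module.End.mul_apply]

lemma exists_homogenize_eq {L : Module.End ℂ ((Fin n → ℂ) × ℂ)} (hL : Function.Injective L)
    (snd_apply : ∀ w, (L w).2 = w.2) : ∃ h, homogenize h = L := by
  let B := LinearMap.fst ℂ _ _ ∘ₗ L ∘ₗ LinearMap.inl ℂ (Fin n → ℂ) ℂ
  have B_injective : Function.Injective B := fun x y hxy ↦
    LinearMap.inl_injective (hL (Prod.ext hxy (by simp [snd_apply])))
  have isUnit_toMatrix : IsUnit (LinearMap.toMatrix' B) := by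
    rw [← mulVec_injective_iff_isUnit]
    simpa [funext (LinearMap.toMatrix'_mulVec B)] using B_injective
  obtain ⟨A, hA⟩ := isUnit_toMatrix
  refine ⟨⟨A, (L (0, 1)).1⟩, LinearMap.ext fun w ↦ Prod.ext ?_ (snd_apply w).symm⟩
  have decompose : w = (w.1, 0) + w.2 • (0, 1) := by simp
  rw [homogenize_apply, hA, LinearMap.toMatrix'_mulVec]
  conv_rhs => rw [decompose, map_add, map_smul]
  rfl

/-- The invertible linear map `homogenize g`. -/
def homogenizeEquiv (g : Aff n) : ((Fin n → ℂ) × ℂ) ≃ₗ[ℂ] (Fin n → ℂ) × ℂ :=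
  .ofLinearMap (homogenize g) (homogenize g⁻¹)
    (by rw [← Module.End.mul_eq_comp, ← map_mul, mul_inv_cancel, map_one]; rfl)
    (by rw [← Module.End.mul_eq_comp, ← map_mul, inv_mul_cancel, map_one]; rfl)

lemma exists_isReversingConjugation_homogenize {g : Aff n} {S : GL (Fin n) ℂ}
    (hS : S * g.A * S⁻¹ = (glConj g.A)⁻¹) :
    ∃ σ, IsReversingConjugation (homogenize g) (LinearMap.snd ℂ _ ℂ) σ := by
  let s : Aff n := ⟨S, 0⟩
  refine exists_isReversingConjugation_of_reverses_on_ker (fun _ ↦ rfl)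
    ((homogenizeEquiv s).trans (starLinearEquiv ℂ)) (fun w hw ↦ ?_) fun w hw ↦ ?_
  · change homogenize g (star (homogenize s (homogenize g w))) = star (homogenize s w)
    rw [← Module.End.mul_apply, ← map_mul, homogenize_star_homogenize]
    refine congrArg star (homogenize_congr ?_ hw)
    change glConj g.A * (S * g.A) = S
    rw [mul_inv_eq_iff_eq_mul.1 hS, mul_inv_cancel_left]
  · change homogenize g (homogenize s⁻¹ (star (homogenize g w))) = homogenize s⁻¹ (star w)
    rw [star_homogenize, ← Module.End.mul_apply, ← Module.End.mul_apply, ← map_mul, ← map_mul]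
    refine homogenize_congr ?_ (star_eq_zero.2 hw)
    change g.A * S⁻¹ * glConj g.A = S⁻¹
    rw [← mul_right_inj S, ← mul_assoc, ← mul_assoc, hS, inv_mul_cancel, mul_inv_cancel]

lemma isStronglyCReversible_of_isReversingConjugation {g : Aff n}
    {σ : (Fin n → ℂ) × ℂ →ₗ⋆[ℂ] (Fin n → ℂ) × ℂ}
    (hσ : IsReversingConjugation (homogenize g) (LinearMap.snd ℂ _ ℂ) σ) :
    IsStronglyCReversible g := by
  obtain ⟨h, hh⟩ := exists_homogenize_eq (L := (starLinearEquiv ℂ).toLinearMap.comp σ)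
    (star_injective.comp hσ.involutive.injective)
    fun w ↦ star_eq_iff_star_eq.1 (hσ.functional_apply w).symm
  have σ_eq (w) : σ w = star (homogenize h w) := by
    rw [hh]
    exact (star_star (σ w)).symm
  have bar_mul_self : bar h * h = 1 := by
    refine homogenize_injective (LinearMap.ext fun w ↦ ?_)
    rw [← star_star (homogenize _ w), ← homogenize_star_homogenize, ← σ_eq, ← σ_eq, hσ.involutive,
      map_one, Module.End.one_apply]
  have bar_mul_mul : bar g * (h * g) = h := by
    refine homogenize_injective (LinearMap.ext fun w ↦ star_injective ?_)
    rw [← homogenize_star_homogenize, map_mul, Module.End.mul_apply, ← σ_eq, ← σ_eq, hσ.reverses]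
  refine ⟨h, mul_eq_one_comm.1 bar_mul_self, ?_⟩
  rw [mul_inv_eq_iff_eq_mul, eq_inv_mul_iff_mul_eq, bar_mul_mul]

end Aff

/-- for `g ∈ Aff(n, ℂ)`, the following are equivalent:
(i) `g` is c-reversible; (ii) `g` is a product of two coninvolutions;
(iii) the linear part `L(g)` is c-reversible in `GL(n, ℂ)`, i.e. similar to
`(L(g)‾)⁻¹`. -/
theorem cReversible_tfae {n : ℕ} (g : Aff n) :
    (Aff.IsCReversible g ↔
      ∃ a b : Aff n, Aff.IsConinvolution a ∧ Aff.IsConinvolution b ∧ g = a * b) ∧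
    (Aff.IsCReversible g ↔
      ∃ S : GL (Fin n) ℂ, S * g.A * S⁻¹ = (Aff.glConj g.A)⁻¹) := by
  have linearPart : Aff.IsCReversible g → ∃ S : GL (Fin n) ℂ, S * g.A * S⁻¹ = (Aff.glConj g.A)⁻¹ :=
    fun ⟨h, hh⟩ ↦ ⟨h.A, congrArg Aff.A hh⟩
  have factorization : (∃ S : GL (Fin n) ℂ, S * g.A * S⁻¹ = (Aff.glConj g.A)⁻¹) →
      ∃ a b : Aff n, Aff.IsConinvolution a ∧ Aff.IsConinvolution b ∧ g = a * b := by
    rintro ⟨S, hS⟩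
    obtain ⟨σ, hσ⟩ := Aff.exists_isReversingConjugation_homogenize hS
    exact (Aff.isStronglyCReversible_of_isReversingConjugation hσ).exists_eq_mul
  have isCReversible : (∃ a b : Aff n, Aff.IsConinvolution a ∧ Aff.IsConinvolution b ∧ g = a * b) →
      Aff.IsCReversible g := by
    rintro ⟨a, b, ha, hb, rfl⟩
    exact ha.isCReversible_mul hb
  exact ⟨⟨fun hg ↦ factorization (linearPart hg), isCReversible⟩,
    linearPart, fun hS ↦ isCReversible (factorization hS)⟩
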